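/- Every AE f ∈ 𝒜(+) can be expressed uniquely, up to the order of the summands, as a sum f = f₁ + ⋯ + f_n with n ≥ 2, where the sets 𝒱(f₁), …, 𝒱(f_n) are pairwise disjoint with union 𝒱(f) and each fⱼ ∈ 𝒜(×, ÷). Moreover: (i) f is of the first type if and only if every fⱼ is of the first type; (ii) f is of the third type if and only if every fⱼ is of the second or third type and the fⱼ's of the second type can be partitioned into pairs {f_{j′}, f_{j″}} with f_{j′} ≅ −f_{j″}. -/

import Mathlib

/- Common framework: `K = ℝ(x₁,x₂,…)` is the field of rational functions over `ℝ` in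
countably many variables (the fraction field of `MvPolynomial ℕ ℝ`), arithmetic
expressions, the permutation action, isomorphism, types, the `EndsWith` classification,
multilinear forms and monicity, isomorphism classes and their counting. -/

open MvPolynomial

noncomputable section

abbrev P : Type := MvPolynomial ℕ ℝ
abbrev K : Type := FractionRing P

def toK : P →+* K := algebraMap P K

/-- The variable `xᵢ`, as an element of `K`. -/
def Xv (i : ℕ) : K := toK (X i)

/-- `Vars f` : the set of variables on which `f` depends, i.e. the variables occurring in a
representation of `f` as a quotient of two coprime polynomials. -/
def Vars (f : K) : Set ℕ :=
  {i | ∃ p q : P, q ≠ 0 ∧ IsRelPrime p q ∧ f = toK p / toK q ∧ (i ∈ p.vars ∨ i ∈ q.vars)}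

/-- `𝒜` : the smallest subset of `K` containing every variable and closed under the four
binary operations applied to expressions with disjoint variable sets. -/
inductive IsAE : K → Prop
  | var (i : ℕ) : IsAE (Xv i)
  | add {g h : K} : IsAE g → IsAE h → Disjoint (Vars g) (Vars h) → IsAE (g + h)
  | sub {g h : K} : IsAE g → IsAE h → Disjoint (Vars g) (Vars h) → IsAE (g - h)
  | mul {g h : K} : IsAE g → IsAE h → Disjoint (Vars g) (Vars h) → IsAE (g * h)
  | div {g h : K} : IsAE g → IsAE h → Disjoint (Vars g) (Vars h) → IsAE (g / h)

/-- The action `σ·f` of a permutation of the variables on `K`, substituting `σ(xᵢ)` for `xᵢ`. -/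
def permAct (σ : Equiv.Perm ℕ) : K ≃+* K :=
  IsFractionRing.ringEquivOfRingEquiv (renameEquiv ℝ σ).toRingEquiv

/-- `f ≅ g` : `f` and `g` are isomorphic, i.e. differ by a permutation of the variables. -/
def Iso (f g : K) : Prop := ∃ σ : Equiv.Perm ℕ, permAct σ f = g

/-- First type: `-f ∉ 𝒜`. -/
def FirstType (f : K) : Prop := IsAE f ∧ ¬ IsAE (-f)

/-- Second type: `-f ∈ 𝒜` but `f ≇ -f`. -/
def SecondType (f : K) : Prop := IsAE f ∧ IsAE (-f) ∧ ¬ Iso f (-f)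

/-- Third type: `-f ∈ 𝒜` and `f ≅ -f`. -/
def ThirdType (f : K) : Prop := IsAE f ∧ IsAE (-f) ∧ Iso f (-f)

/-- The four binary operators. -/
inductive Op : Type
  | add | sub | mul | div
deriving DecidableEq

/-- `EndsWith f o` : the arithmetic expression `f` ends with the operator `o`. -/
inductive EndsWith : K → Op → Prop
  | var (i : ℕ) : EndsWith (Xv i) Op.mul
  | add_base {i j : ℕ} (hij : i ≠ j) : EndsWith (Xv i + Xv j) Op.add
  | sub_base {i j : ℕ} (hij : i ≠ j) : EndsWith (Xv i - Xv j) Op.sub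
  | mul_base {i j : ℕ} (hij : i ≠ j) : EndsWith (Xv i * Xv j) Op.mul
  | div_base {i j : ℕ} (hij : i ≠ j) : EndsWith (Xv i / Xv j) Op.div
  | add_rec {g h : K} {o₁ o₂ : Op} : IsAE g → IsAE h → Disjoint (Vars g) (Vars h) →
      3 ≤ (Vars (g + h)).ncard → o₁ ≠ Op.sub → o₂ ≠ Op.sub →
      EndsWith g o₁ → EndsWith h o₂ → EndsWith (g + h) Op.add
  | mul_rec {g h : K} {o₁ o₂ : Op} : IsAE g → IsAE h → Disjoint (Vars g) (Vars h) →
      3 ≤ (Vars (g * h)).ncard → o₁ ≠ Op.div → o₂ ≠ Op.div →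
      EndsWith g o₁ → EndsWith h o₂ → EndsWith (g * h) Op.mul
  | div_rec {g h : K} {o₁ o₂ : Op} : IsAE g → IsAE h → Disjoint (Vars g) (Vars h) →
      3 ≤ (Vars (g / h)).ncard → o₁ ≠ Op.div → o₂ ≠ Op.div →
      EndsWith g o₁ → EndsWith h o₂ → EndsWith (g / h) Op.div
  | sub_rec {g h : K} {o₁ o₂ : Op} : IsAE g → IsAE h → Disjoint (Vars g) (Vars h) →
      3 ≤ (Vars (g - h)).ncard → o₁ ≠ Op.sub → o₂ ≠ Op.sub → FirstType h →
      EndsWith g o₁ → EndsWith h o₂ → EndsWith (g - h) Op.sub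

/-- `f` ends with one of the operators in `s`. -/
def EndsIn (f : K) (s : Set Op) : Prop := ∃ o ∈ s, EndsWith f o

/-- The binary operation on `K` corresponding to an operator. -/
def applyOp (o : Op) (a b : K) : K :=
  match o with
  | Op.add => a + b
  | Op.sub => a - b
  | Op.mul => a * b
  | Op.div => a / b

/-- The variable index set `{1, …, n}` (for the variables `x₁, …, xₙ`). -/
def varsUpTo (n : ℕ) : Set ℕ := {i | 1 ≤ i ∧ i ≤ n}

/-- `𝒜ₙ` : arithmetic expressions whose variable set is exactly `{x₁, …, xₙ}`. -/
def AEn (n : ℕ) : Set K := {f | IsAE f ∧ Vars f = varsUpTo n}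

/-- A multilinear polynomial: degree at most `1` in each variable. -/
def Multilinear (p : P) : Prop := ∀ i : ℕ, p.degreeOf i ≤ 1

/-- The key of a (multilinear) monomial: the sorted list of variables occurring in it;
keys are compared in the lexicographic order on lists. -/
def monKey (m : ℕ →₀ ℕ) : List ℕ := m.support.sort (· ≤ ·)

/-- A (multilinear) polynomial is monic if the coefficient of its lexicographically
leading (i.e. first) monomial is positive. -/
def MonicML (p : P) : Prop :=
  ∃ m ∈ p.support, 0 < p.coeff m ∧ ∀ m' ∈ p.support, monKey m ≤ monKey m'

/-- `MLForm f F₁ F₂` : `F₁ / F₂` is the multilinear form of `f`: `F₁, F₂` are coprime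
multilinear polynomials, `F₂` is monic, and `f = F₁ / F₂`. -/
def MLForm (f : K) (F₁ F₂ : P) : Prop :=
  Multilinear F₁ ∧ Multilinear F₂ ∧ IsRelPrime F₁ F₂ ∧ F₂ ≠ 0 ∧ MonicML F₂ ∧
    f = toK F₁ / toK F₂

/-- A monic arithmetic expression: the numerator of its multilinear form is monic as well. -/
def MonicAE (f : K) : Prop := ∃ F₁ F₂ : P, MLForm f F₁ F₂ ∧ MonicML F₁

/-- The isomorphism class of `f`. -/
def classOf (f : K) : Set K := {g | Iso f g}

/-- `S̄` : the set of isomorphism classes of elements of `S`. -/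
def classes (S : Set K) : Set (Set K) := classOf '' S

/-- `|S̄|` : the number of isomorphism classes of elements of `S`. -/
def countClasses (S : Set K) : ℕ := (classes S).ncard

/-- The number of isomorphism classes of elements of `S` depending on exactly `k` variables. -/
def gradeCount (S : Set K) (k : ℕ) : ℕ := countClasses {f ∈ S | (Vars f).ncard = k}

/-- `ω_n` for a graded family having `N k` elements in grade `k` : the sum over all
partitions `(k₁^{m₁},…,k_s^{m_s})` of `n` of `∏ⱼ C(N kⱼ + mⱼ - 1, mⱼ)`. -/
def omega (N : ℕ → ℕ) (n : ℕ) : ℕ :=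
  ∑ p : n.Partition,
    ∏ k ∈ p.parts.toFinset, Nat.choose (N k + p.parts.count k - 1) (p.parts.count k)

/-- `ω_n′` : the same sum restricted to non-trivial partitions, i.e. `ω_n - N n`. -/
def omega' (N : ℕ → ℕ) (n : ℕ) : ℕ := omega N n - N n

/-- `𝒜(s)` : arithmetic expressions ending with one of the operators in `s`. -/
def Aset (s : Set Op) : Set K := {f | IsAE f ∧ EndsIn f s}

/-- `ℱ(s)` : first-type arithmetic expressions ending with one of the operators in `s`. -/
def Fset (s : Set Op) : Set K := {f | FirstType f ∧ EndsIn f s}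

/-- `ℬ(s)` : second-type arithmetic expressions ending with one of the operators in `s`. -/
def Bset (s : Set Op) : Set K := {f | SecondType f ∧ EndsIn f s}

/-- `𝒞(s)` : third-type arithmetic expressions ending with one of the operators in `s`. -/
def Cset (s : Set Op) : Set K := {f | ThirdType f ∧ EndsIn f s}

/-- `ℳℬ(s)` : monic second-type arithmetic expressions ending with an operator in `s`. -/
def MBset (s : Set Op) : Set K := {f | SecondType f ∧ MonicAE f ∧ EndsIn f s}


/-- A decomposition of `f` as a sum `f = f₁ + ⋯ + f_n` (`n ≥ 2`, given by the multiset `s`)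
with pairwise disjoint variable sets whose union is `𝒱(f)`, each summand in `𝒜(×,÷)`. -/
def SumDecomp (f : K) (s : Multiset K) : Prop :=
  2 ≤ Multiset.card s ∧
  (∀ g ∈ s, IsAE g ∧ (EndsWith g Op.mul ∨ EndsWith g Op.div)) ∧
  s.Pairwise (fun a b => Disjoint (Vars a) (Vars b)) ∧
  f = s.sum ∧ Vars f = {i | ∃ g ∈ s, i ∈ Vars g}

/-! ### Variables -/

lemma toK_inj {p q : P} : toK p = toK q ↔ p = q :=
  (IsFractionRing.injective P K).eq_iff

lemma toK_ne_zero {p : P} (h : p ≠ 0) : toK p ≠ 0 := by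
  rw [← map_zero toK]; exact fun h' => h (toK_inj.1 h')

lemma vars_dvd {p q : P} (h : p ∣ q) (hq : q ≠ 0) : p.vars ⊆ q.vars := by
  obtain ⟨r, rfl⟩ := h
  intro i hi
  rw [mem_vars_iff_degreeOf_ne_zero] at *
  rw [degreeOf_mul_eq (left_ne_zero_of_mul hq) (right_ne_zero_of_mul hq)]
  omega

lemma exists_red (f : K) : ∃ p q : P, q ≠ 0 ∧ IsRelPrime p q ∧ f = toK p / toK q := by
  obtain ⟨a, b, h, e⟩ := IsFractionRing.exists_reduced_fraction P f
  refine ⟨a, b, nonZeroDivisors.coe_ne_zero b, h, ?_⟩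
  rw [← e, IsFractionRing.mk'_eq_div]; rfl

lemma Vars_subset_of_rep {f : K} {p q : P} (hq : q ≠ 0) (h : f = toK p / toK q) :
    Vars f ⊆ ↑p.vars ∪ ↑q.vars := by
  rintro i ⟨p0, q0, hq0, hr, e, hi⟩
  have e2 : p * q0 = p0 * q := by
    rw [h, div_eq_div_iff (toK_ne_zero hq) (toK_ne_zero hq0), ← map_mul, ← map_mul] at e
    exact toK_inj.1 e
  have h1 : q0 ∣ q := hr.symm.dvd_of_dvd_mul_left (y := p0) (e2 ▸ dvd_mul_left q0 p)
  have h2 : p0 ∣ p := hr.dvd_of_dvd_mul_right (z := q0) (e2 ▸ dvd_mul_right p0 q)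
  rcases hi with hi | hi
  · left
    by_cases hp : p = 0
    · subst hp
      have : p0 = 0 := by
        rcases mul_eq_zero.1 (by simpa using e2.symm : p0 * q = 0) with h | h
        · exact h
        · exact absurd h hq
      simp [this] at hi
    · exact vars_dvd h2 hp hi
  · right; exact vars_dvd h1 hq hi

lemma exists_rep (f : K) : ∃ p q : P, q ≠ 0 ∧ f = toK p / toK q ∧
    Vars f = ↑p.vars ∪ ↑q.vars := by
  obtain ⟨p, q, hq, hr, e⟩ := exists_red f
  refine ⟨p, q, hq, e, (Vars_subset_of_rep hq e).antisymm ?_⟩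
  rintro i hi
  exact ⟨p, q, hq, hr, e, hi⟩

lemma Vars_finite (f : K) : (Vars f).Finite := by
  obtain ⟨p, q, -, -, h⟩ := exists_rep f
  rw [h]; exact (Finset.finite_toSet _).union (Finset.finite_toSet _)

lemma Vars_neg (f : K) : Vars (-f) = Vars f := by
  have key : ∀ f : K, Vars (-f) ⊆ Vars f := by
    intro f
    obtain ⟨p, q, hq, e, h⟩ := exists_rep f
    have := Vars_subset_of_rep (f := -f) (p := -p) hq (by rw [e, map_neg, neg_div])
    rwa [vars_neg, ← h] at this
  exact (key f).antisymm (by simpa using key (-f))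

lemma Vars_add (f g : K) : Vars (f + g) ⊆ Vars f ∪ Vars g := by
  obtain ⟨p, q, hq, e, h⟩ := exists_rep f
  obtain ⟨p', q', hq', e', h'⟩ := exists_rep g
  have := Vars_subset_of_rep (f := f + g) (p := p * q' + q * p') (mul_ne_zero hq hq') (by
    rw [e, e', div_add_div _ _ (toK_ne_zero hq) (toK_ne_zero hq')]; simp)
  intro i hi
  have hi := this hi
  rw [h, h']
  simp only [Set.mem_union, Finset.mem_coe] at *
  rcases hi with hi | hi
  · have := vars_add_subset _ _ hi
    simp only [Finset.mem_union] at this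
    rcases this with h | h <;> have := vars_mul _ _ h <;> simp only [Finset.mem_union] at this <;>
      tauto
  · have := vars_mul _ _ hi
    simp only [Finset.mem_union] at this
    tauto

lemma Vars_mul (f g : K) : Vars (f * g) ⊆ Vars f ∪ Vars g := by
  obtain ⟨p, q, hq, e, h⟩ := exists_rep f
  obtain ⟨p', q', hq', e', h'⟩ := exists_rep g
  have := Vars_subset_of_rep (f := f * g) (p := p * p') (mul_ne_zero hq hq') (by
    rw [e, e', div_mul_div_comm]; simp)
  intro i hi
  have hi := this hi
  rw [h, h']
  simp only [Set.mem_union, Finset.mem_coe] at *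
  rcases hi with hi | hi <;> have := vars_mul _ _ hi <;> simp only [Finset.mem_union] at this <;>
    tauto

lemma Vars_const (r : ℝ) : Vars (toK (C r)) = ∅ := by
  have := Vars_subset_of_rep (f := toK (C r)) (p := C r) (q := 1) one_ne_zero (by simp)
  simpa using this

lemma Vars_zero : Vars 0 = ∅ := by
  simpa using Vars_const 0

lemma Vars_inv (f : K) : Vars f⁻¹ = Vars f := by
  have key : ∀ f : K, Vars f⁻¹ ⊆ Vars f := by
    intro f
    by_cases hf : f = 0
    · simp [hf]
    obtain ⟨p, q, hq, e, h⟩ := exists_rep f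
    have hp : p ≠ 0 := by rintro rfl; simp at e; exact hf e
    have := Vars_subset_of_rep (f := f⁻¹) (p := q) hp (by rw [e, inv_div])
    rwa [Set.union_comm, ← h] at this
  exact (key f).antisymm (by simpa using key f⁻¹)

lemma Vars_sub (f g : K) : Vars (f - g) ⊆ Vars f ∪ Vars g := by
  rw [sub_eq_add_neg, ← Vars_neg g]; exact Vars_add _ _

lemma Vars_Xv (i : ℕ) : Vars (Xv i) = {i} := by
  apply Set.Subset.antisymm
  · have := Vars_subset_of_rep (f := Xv i) (p := X i) (q := 1) one_ne_zero (by simp [Xv])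
    simpa using this
  · rintro j rfl
    exact ⟨X j, 1, one_ne_zero, isRelPrime_one_right, by simp [Xv], by simp⟩

lemma eq_const {f : K} (h : Vars f = ∅) : ∃ r : ℝ, f = toK (C r) := by
  obtain ⟨p, q, hq, e, h'⟩ := exists_rep f
  rw [h] at h'
  have hp : p.vars = ∅ := by
    ext i; have := congrArg (i ∈ ·) h'; simp at this; simp [this]
  have hq' : q.vars = ∅ := by
    ext i; have := congrArg (i ∈ ·) h'; simp at this; simp [this]
  rw [vars_eq_empty_iff_eq_C] at hp hq'
  generalize p.coeff 0 = a at hp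
  generalize q.coeff 0 = b at hq'
  subst hp hq'
  have hb : b ≠ 0 := by rintro rfl; simp at hq
  refine ⟨a / b, ?_⟩
  rw [e, div_eq_iff (toK_ne_zero hq), ← map_mul, ← C_mul, div_mul_cancel₀ _ hb]

lemma Vars_add_disj {f g : K} (h : Disjoint (Vars f) (Vars g)) :
    Vars (f + g) = Vars f ∪ Vars g := by
  apply (Vars_add f g).antisymm
  rw [Set.disjoint_left] at h
  rintro i (hi | hi)
  · have := Vars_sub (f + g) g
    rw [add_sub_cancel_right] at this
    exact (this hi).resolve_right (h hi)
  · have := Vars_sub (f + g) f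
    rw [add_sub_cancel_left] at this
    exact (this hi).resolve_right (fun h' => h h' hi)

lemma Vars_mul_disj {f g : K} (hf : f ≠ 0) (hg : g ≠ 0) (h : Disjoint (Vars f) (Vars g)) :
    Vars (f * g) = Vars f ∪ Vars g := by
  apply (Vars_mul f g).antisymm
  rw [Set.disjoint_left] at h
  rintro i (hi | hi)
  · have := Vars_mul (f * g) g⁻¹
    rw [mul_inv_cancel_right₀ hg, Vars_inv] at this
    exact (this hi).resolve_right (h hi)
  · have := Vars_mul (f * g) f⁻¹
    rw [mul_comm f, mul_inv_cancel_right₀ hf, Vars_inv] at this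
    rw [mul_comm f]
    exact (this hi).resolve_right (fun h' => h h' hi)

lemma ne_zero_of_Vars {f : K} (h : (Vars f).Nonempty) : f ≠ 0 := by
  rintro rfl; simp [Vars_zero] at h

lemma IsAE.vars_nonempty {f : K} (h : IsAE f) : (Vars f).Nonempty := by
  induction h with
  | var i => simp [Vars_Xv]
  | add _ _ hd hg hh => rw [Vars_add_disj hd]; exact hg.inl
  | @sub g h _ _ hd hg hh =>
    rw [sub_eq_add_neg, Vars_add_disj (by rwa [Vars_neg])]; exact hg.inl
  | mul _ _ hd hg hh =>
    rw [Vars_mul_disj (ne_zero_of_Vars hg) (ne_zero_of_Vars hh) hd]; exact hg.inl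
  | @div g h _ _ hd hg hh =>
    rw [div_eq_mul_inv, Vars_mul_disj (ne_zero_of_Vars hg) (inv_ne_zero (ne_zero_of_Vars hh))
      (by rwa [Vars_inv])]
    exact hg.inl

/-! ### Permutations -/

lemma permAct_toK (σ : Equiv.Perm ℕ) (p : P) : permAct σ (toK p) = toK (rename σ p) := by
  unfold permAct toK
  rw [IsFractionRing.ringEquivOfRingEquiv_algebraMap]
  rfl

lemma permAct_Xv (σ : Equiv.Perm ℕ) (i : ℕ) : permAct σ (Xv i) = Xv (σ i) := by
  simp [Xv, permAct_toK]

lemma permAct_congr {σ τ : Equiv.Perm ℕ} {f : K} (h : ∀ i ∈ Vars f, σ i = τ i) :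
    permAct σ f = permAct τ f := by
  obtain ⟨p, q, hq, e, h'⟩ := exists_rep f
  have key : ∀ p : P, (∀ i ∈ p.vars, σ i = τ i) → rename σ p = rename τ p := by
    intro p hp
    apply hom_congr_vars (f₁ := (rename σ : P →ₐ[ℝ] P).toRingHom)
      (f₂ := (rename τ : P →ₐ[ℝ] P).toRingHom) (p₁ := p) (p₂ := p)
    · ext; simp
    · intro i hi _; simp [hp i hi]
    · rfl
  rw [e, map_div₀, map_div₀, permAct_toK, permAct_toK, permAct_toK, permAct_toK, key p, key q]
  · intro i hi; exact h i (by rw [h']; right; exact hi)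
  · intro i hi; exact h i (by rw [h']; left; exact hi)

lemma permAct_one (f : K) : permAct 1 f = f := by
  obtain ⟨p, q, hq, e, h'⟩ := exists_rep f
  rw [e, map_div₀, permAct_toK, permAct_toK]
  simp

lemma permAct_mul (σ τ : Equiv.Perm ℕ) (f : K) : permAct (σ * τ) f = permAct σ (permAct τ f) := by
  obtain ⟨p, q, hq, e, h'⟩ := exists_rep f
  simp only [e, map_div₀, permAct_toK, rename_rename, Equiv.Perm.coe_mul]

lemma permAct_fix {σ : Equiv.Perm ℕ} {f : K} (h : ∀ i ∈ Vars f, σ i = i) : permAct σ f = f := by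
  rw [permAct_congr (τ := 1) h, permAct_one]

lemma Vars_permAct_sub (σ : Equiv.Perm ℕ) (f : K) : Vars (permAct σ f) ⊆ σ '' Vars f := by
  obtain ⟨p, q, hq, e, h'⟩ := exists_rep f
  have := Vars_subset_of_rep (f := permAct σ f) (p := rename σ p) (q := rename σ q)
    ((map_ne_zero_iff _ (rename_injective σ σ.injective)).2 hq)
    (by rw [e, map_div₀, permAct_toK, permAct_toK])
  refine this.trans ?_
  rw [h', Set.image_union]
  apply Set.union_subset_union <;>
  · intro j hj
    exact mem_vars_rename σ _ hj

lemma Vars_permAct (σ : Equiv.Perm ℕ) (f : K) : Vars (permAct σ f) = σ '' Vars f := by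
  apply (Vars_permAct_sub σ f).antisymm
  rintro _ ⟨i, hi, rfl⟩
  have h := Vars_permAct_sub σ⁻¹ (permAct σ f)
  rw [← permAct_mul, inv_mul_cancel, permAct_one] at h
  obtain ⟨j, hj, rfl⟩ := h hi
  simpa using hj

lemma IsAE.perm {f : K} (h : IsAE f) (σ : Equiv.Perm ℕ) : IsAE (permAct σ f) := by
  have hd : ∀ {g h : K}, Disjoint (Vars g) (Vars h) →
      Disjoint (Vars (permAct σ g)) (Vars (permAct σ h)) := by
    intro g h hd
    rw [Vars_permAct, Vars_permAct]
    exact (Set.disjoint_image_iff σ.injective).2 hd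
  induction h with
  | var i => rw [permAct_Xv]; exact .var _
  | add _ _ h hg hh => rw [map_add]; exact .add hg hh (hd h)
  | sub _ _ h hg hh => rw [map_sub]; exact .sub hg hh (hd h)
  | mul _ _ h hg hh => rw [map_mul]; exact .mul hg hh (hd h)
  | div _ _ h hg hh => rw [map_div₀]; exact .div hg hh (hd h)

/-! ### Links between variables -/

/-- The mixed difference of `f` in two given directions. -/
def mixDiff (a b a' b' : ℕ) (f : K) : K :=
  permAct (Equiv.swap a b) (permAct (Equiv.swap a' b') f - f) - (permAct (Equiv.swap a' b') f - f)

/-- `f` is not separable with respect to any non-trivial partition of its variables. -/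
def Link (f : K) : Prop :=
  ∀ A : Set ℕ, (Vars f ∩ A).Nonempty → (Vars f \ A).Nonempty →
    ∃ a ∈ Vars f ∩ A, ∃ a' ∈ Vars f \ A,
      ∀ b b', b ∉ Vars f → b' ∉ Vars f → b ≠ b' → mixDiff a b a' b' f ≠ 0

lemma mixDiff_add (a b a' b' : ℕ) (f g : K) :
    mixDiff a b a' b' (f + g) = mixDiff a b a' b' f + mixDiff a b a' b' g := by
  simp only [mixDiff, map_add, map_sub]; ring

lemma mixDiff_neg (a b a' b' : ℕ) (f : K) :
    mixDiff a b a' b' (-f) = - mixDiff a b a' b' f := by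
  simp only [mixDiff, map_neg, map_sub]; ring

lemma swap_fix {a b : ℕ} {f : K} (ha : a ∉ Vars f) (hb : b ∉ Vars f) :
    permAct (Equiv.swap a b) f = f :=
  permAct_fix fun i hi => Equiv.swap_apply_of_ne_of_ne
    (by rintro rfl; exact ha hi) (by rintro rfl; exact hb hi)

lemma swap_ne {a b : ℕ} {f : K} (ha : a ∈ Vars f) (hb : b ∉ Vars f) :
    permAct (Equiv.swap a b) f - f ≠ 0 := by
  intro h
  have h := congrArg Vars (sub_eq_zero.1 h)
  rw [Vars_permAct] at h
  apply hb
  rw [← h]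
  exact ⟨a, ha, Equiv.swap_apply_left a b⟩

lemma mixDiff_right {a b a' b' : ℕ} {f : K} (ha : a' ∉ Vars f) (hb : b' ∉ Vars f) :
    mixDiff a b a' b' f = 0 := by
  simp [mixDiff, swap_fix ha hb]

lemma mixDiff_left {a b a' b' : ℕ} {f : K} (ha : a ∉ Vars f) (hb : b ∉ Vars f)
    (h1 : a ≠ a') (h2 : a ≠ b') (h3 : b ≠ a') (h4 : b ≠ b') :
    mixDiff a b a' b' f = 0 := by
  have key : ∀ c, c ∉ Vars f → c ≠ a' → c ≠ b' → c ∉ Vars (permAct (Equiv.swap a' b') f) := by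
    intro c hc h h' hc'
    rw [Vars_permAct] at hc'
    obtain ⟨d, hd, rfl⟩ := hc'
    apply hc
    by_cases e : d = a'
    · subst e; simp at h'
    by_cases e' : d = b'
    · subst e'; simp at h
    rwa [Equiv.swap_apply_of_ne_of_ne e e']
  simp [mixDiff, swap_fix ha hb, swap_fix (key a ha h1 h2) (key b hb h3 h4)]

lemma mixDiff_mul {a b a' b' : ℕ} {g h : K} (ha : a ∉ Vars h) (hb : b ∉ Vars h)
    (ha' : a' ∉ Vars g) (hb' : b' ∉ Vars g)
    (h1 : a ≠ a') (h2 : a ≠ b') (h3 : b ≠ a') (h4 : b ≠ b') :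
    mixDiff a b a' b' (g * h) =
      (permAct (Equiv.swap a b) g - g) * (permAct (Equiv.swap a' b') h - h) := by
  have := mixDiff_left ha hb h1 h2 h3 h4
  have e : permAct (Equiv.swap a b) (permAct (Equiv.swap a' b') h) =
      permAct (Equiv.swap a' b') h := by
    simp only [mixDiff, map_sub, swap_fix ha hb] at this
    linear_combination this
  simp only [mixDiff, map_sub, map_mul, swap_fix ha hb, swap_fix ha' hb', e]
  ring

lemma Link.neg {f : K} (h : Link f) : Link (-f) := by
  intro A h1 h2
  simp only [Vars_neg, mixDiff_neg, neg_ne_zero] at *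
  exact h A h1 h2

lemma link_mul {g h : K} (hg : (Vars g).Nonempty) (hh : (Vars h).Nonempty)
    (hd : Disjoint (Vars g) (Vars h)) : Link (g * h) := by
  intro A h1 h2
  rw [Vars_mul_disj (ne_zero_of_Vars hg) (ne_zero_of_Vars hh) hd] at *
  rw [Set.disjoint_left] at hd
  -- one variable in each factor
  have key : (∃ a ∈ Vars g, a ∈ A ∧ ∃ a' ∈ Vars h, a' ∉ A) ∨
      (∃ a ∈ Vars h, a ∈ A ∧ ∃ a' ∈ Vars g, a' ∉ A) := by
    obtain ⟨x, hx, hxA⟩ := h1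
    obtain ⟨y, hy, hyA⟩ := h2
    obtain ⟨u, hu⟩ := hg
    obtain ⟨w, hw⟩ := hh
    by_cases huA : u ∈ A <;> by_cases hwA : w ∈ A <;> rcases hx with hx | hx <;>
      rcases hy with hy | hy
    all_goals
      first
      | exact Or.inl ⟨x, hx, hxA, y, hy, hyA⟩
      | exact Or.inr ⟨x, hx, hxA, y, hy, hyA⟩
      | exact Or.inl ⟨u, hu, huA, y, hy, hyA⟩
      | exact Or.inr ⟨w, hw, hwA, y, hy, hyA⟩
      | exact Or.inl ⟨x, hx, hxA, w, hw, hwA⟩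
      | exact Or.inr ⟨x, hx, hxA, u, hu, huA⟩
  rcases key with ⟨a, ha, haA, a', ha', haA'⟩ | ⟨a, ha, haA, a', ha', haA'⟩
  · refine ⟨a, ⟨.inl ha, haA⟩, a', ⟨.inr ha', haA'⟩, fun b b' hb hb' hbb => ?_⟩
    simp only [Set.mem_union, not_or] at hb hb'
    rw [mixDiff_mul (hd ha) hb.2 (fun h => hd h ha') hb'.1]
    · exact mul_ne_zero (swap_ne ha hb.1) (swap_ne ha' hb'.2)
    · rintro rfl; exact haA' haA
    · rintro rfl; exact hb'.1 ha
    · rintro rfl; exact hb.2 ha'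
    · exact hbb
  · refine ⟨a, ⟨.inr ha, haA⟩, a', ⟨.inl ha', haA'⟩, fun b b' hb hb' hbb => ?_⟩
    simp only [Set.mem_union, not_or] at hb hb'
    rw [mul_comm, mixDiff_mul (fun h => hd h ha) hb.1 (hd ha') hb'.2]
    · exact mul_ne_zero (swap_ne ha hb.2) (swap_ne ha' hb'.1)
    · rintro rfl; exact haA' haA
    · rintro rfl; exact hb'.2 ha
    · rintro rfl; exact hb.1 ha'
    · exact hbb

lemma link_div {g h : K} (hg : (Vars g).Nonempty) (hh : (Vars h).Nonempty)
    (hd : Disjoint (Vars g) (Vars h)) : Link (g / h) := by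
  rw [div_eq_mul_inv]
  exact link_mul hg (by rwa [Vars_inv]) (by rwa [Vars_inv])

lemma link_Xv (i : ℕ) : Link (Xv i) := by
  intro A h1 h2
  rw [Vars_Xv] at *
  obtain ⟨x, rfl, hx⟩ := h1
  obtain ⟨y, rfl, hy⟩ := h2
  exact absurd hx hy

lemma link_subset {u v g r : K} (hg : Link g) (huv : Disjoint (Vars u) (Vars v))
    (hgr : Disjoint (Vars g) (Vars r)) (e : u + v = g + r)
    (hne : (Vars u ∩ Vars g).Nonempty) : Vars g ⊆ Vars u := by
  by_contra hcon
  obtain ⟨y, hy, hyu⟩ := Set.not_subset.1 hcon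
  obtain ⟨a, ⟨hag, hau⟩, a', ⟨hag', hau'⟩, H⟩ := hg (Vars u)
    (by rwa [Set.inter_comm]) ⟨y, hy, hyu⟩
  have hfin : (Vars u ∪ Vars v ∪ Vars g ∪ Vars r).Finite :=
    (((Vars_finite u).union (Vars_finite v)).union (Vars_finite g)).union (Vars_finite r)
  obtain ⟨b, hb⟩ := hfin.exists_notMem
  obtain ⟨b', hb'⟩ := (hfin.insert b).exists_notMem
  simp only [Set.mem_insert_iff, Set.mem_union, not_or] at hb hb'
  rw [Set.disjoint_left] at huv hgr
  apply H b b' hb.1.2 hb'.2.1.2 (Ne.symm hb'.1)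
  have h1 : mixDiff a b a' b' (g + r) = mixDiff a b a' b' g := by
    rw [mixDiff_add, mixDiff_right (f := r) (hgr hag') hb'.2.2, add_zero]
  rw [← h1, ← e, mixDiff_add, mixDiff_right hau' hb'.2.1.1.1,
    mixDiff_left (huv hau) hb.1.1.2, add_zero]
  · rintro rfl; exact hau' hau
  · rintro rfl; exact hb'.2.1.1.1 hau
  · rintro rfl; exact hb.1.2 hag'
  · exact Ne.symm hb'.1

/-! ### A family of valuations -/

/-- The value group. -/
abbrev Gam : Type := Lex (ℕ →₀ ℤ)

/-- The weight of the variable `i`. -/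
def wt (ε : ℕ → ℤˣ) (i : ℕ) : Gam := toLex (Finsupp.single i (ε i : ℤ))

/-- The substitution homomorphism into Hahn series. -/
def hahnP (ε : ℕ → ℤˣ) : P →ₐ[ℝ] HahnSeries Gam ℝ :=
  aeval fun i => HahnSeries.single (wt ε i) 1

/-- The weight of a monomial. -/
def wtm (ε : ℕ → ℤˣ) (m : ℕ →₀ ℕ) : Gam := m.sum fun i k => k • wt ε i

lemma wtm_apply (ε : ℕ → ℤˣ) (m : ℕ →₀ ℕ) (j : ℕ) :
    (ofLex (wtm ε m)) j = m j * (ε j : ℤ) := by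
  have : ofLex (wtm ε m) = m.sum fun i k => k • Finsupp.single i (ε i : ℤ) := rfl
  rw [this, Finsupp.sum_apply]
  rw [Finsupp.sum, Finset.sum_eq_single j]
  · simp
  · intro b _ hb
    simp [hb]
  · intro h; simp [Finsupp.notMem_support_iff.1 h]

lemma wtm_injective (ε : ℕ → ℤˣ) : Function.Injective (wtm ε) := by
  intro m m' h
  ext j
  have h1 := wtm_apply ε m j
  rw [h, wtm_apply] at h1
  exact_mod_cast (mul_right_cancel₀ (Units.ne_zero (ε j)) h1).symm

lemma hahnP_monomial (ε : ℕ → ℤˣ) (m : ℕ →₀ ℕ) (r : ℝ) :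
    hahnP ε (monomial m r) = HahnSeries.single (wtm ε m) r := by
  have hp : ∀ (g : Gam) (k : ℕ), (HahnSeries.single g (1 : ℝ)) ^ k =
      HahnSeries.single (k • g) 1 := by
    intro g k; simp [HahnSeries.single_pow]
  rw [hahnP, aeval_monomial]
  have : (m.prod fun i k => (HahnSeries.single (wt ε i) (1 : ℝ)) ^ k) =
      HahnSeries.single (wtm ε m) 1 := by
    simp only [hp, wtm, Finsupp.prod, Finsupp.sum]
    induction m.support using Finset.induction_on with
    | empty => simp
    | insert a s ha ih => rw [Finset.prod_insert ha, Finset.sum_insert ha, ih]; simp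
  rw [this, HahnSeries.algebraMap_apply]
  simp [HahnSeries.C_apply]

lemma hahnP_coeff (ε : ℕ → ℤˣ) (p : P) (m : ℕ →₀ ℕ) :
    (hahnP ε p).coeff (wtm ε m) = p.coeff m := by
  induction p using MvPolynomial.induction_on' with
  | monomial u a =>
    rw [hahnP_monomial, HahnSeries.coeff_single, coeff_monomial]
    simp [(wtm_injective ε).eq_iff, eq_comm]
  | add p q ihp ihq =>
    rw [map_add, HahnSeries.coeff_add, ihp, ihq, coeff_add]

lemma hahnP_injective (ε : ℕ → ℤˣ) : Function.Injective (hahnP ε) := by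
  intro p q h
  ext m
  rw [← hahnP_coeff ε, h, hahnP_coeff]

/-- The embedding of `K` into Hahn series. -/
def hahnK (ε : ℕ → ℤˣ) : K →+* HahnSeries Gam ℝ :=
  IsFractionRing.lift (A := P) (g := (hahnP ε).toRingHom) (hahnP_injective ε)

lemma hahnK_toK (ε : ℕ → ℤˣ) (p : P) : hahnK ε (toK p) = hahnP ε p :=
  IsFractionRing.lift_algebraMap (hahnP_injective ε) p

/-- The valuation of `K` attached to a choice of signs. -/
def val (ε : ℕ → ℤˣ) : AddValuation K (WithTop Gam) :=
  (HahnSeries.addVal Gam ℝ).comap (hahnK ε)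

lemma val_Xv (ε : ℕ → ℤˣ) (i : ℕ) : val ε (Xv i) = (wt ε i : WithTop Gam) := by
  show HahnSeries.addVal Gam ℝ (hahnK ε (Xv i)) = _
  rw [Xv, hahnK_toK, hahnP, aeval_X, HahnSeries.addVal_apply,
    HahnSeries.orderTop_single one_ne_zero]

lemma val_C (ε : ℕ → ℤˣ) {r : ℝ} (hr : r ≠ 0) : val ε (toK (C r)) = ((0 : Gam) : WithTop Gam) := by
  show HahnSeries.addVal Gam ℝ (hahnK ε (toK (C r))) = _
  rw [hahnK_toK, hahnP, aeval_C, HahnSeries.addVal_apply, HahnSeries.algebraMap_apply]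
  simp only [HahnSeries.C_apply, Algebra.algebraMap_self, RingHom.id_apply]
  rw [HahnSeries.orderTop_single hr]

/-- `γ` is non-zero and only involves the variables of `S`. -/
def Good (S : Set ℕ) (γ : Gam) : Prop := γ ≠ 0 ∧ ∀ i, i ∉ S → (ofLex γ) i = 0

lemma Good.ne {S T : Set ℕ} {γ δ : Gam} (h : Disjoint S T) (hγ : Good S γ) (hδ : Good T δ) :
    γ ≠ δ := by
  rintro rfl
  apply hγ.1
  apply ofLex.injective
  ext i
  by_cases hi : i ∈ S
  · exact hδ.2 i (Set.disjoint_left.1 h hi)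
  · exact hγ.2 i hi

lemma Good.neg {S : Set ℕ} {γ : Gam} (h : Good S γ) : Good S (-γ) :=
  ⟨neg_ne_zero.2 h.1, fun i hi => by simp [h.2 i hi]⟩

lemma Good.mono {S T : Set ℕ} {γ : Gam} (h : S ⊆ T) (hγ : Good S γ) : Good T γ :=
  ⟨hγ.1, fun i hi => hγ.2 i fun h' => hi (h h')⟩

lemma Good.add {S T : Set ℕ} {γ δ : Gam} (h : Disjoint S T) (hγ : Good S γ) (hδ : Good T δ) :
    Good (S ∪ T) (γ + δ) := by
  refine ⟨?_, fun i hi => ?_⟩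
  · intro e
    exact hγ.ne h hδ.neg (eq_neg_of_add_eq_zero_left e)
  · simp only [Set.mem_union, not_or] at hi
    simp [hγ.2 i hi.1, hδ.2 i hi.2]

lemma val_inv {ε : ℕ → ℤˣ} {h : K} {δ : Gam} (hδ : val ε h = (δ : WithTop Gam)) :
    val ε h⁻¹ = ((-δ : Gam) : WithTop Gam) := by
  have h0 : h ≠ 0 := by rintro rfl; simp at hδ
  have h1 : val ε (h * h⁻¹) = val ε h + val ε h⁻¹ := AddValuation.map_mul _ _ _
  rw [mul_inv_cancel₀ h0, AddValuation.map_one, hδ] at h1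
  cases e : val ε h⁻¹ with
  | top => rw [e] at h1; simp at h1
  | coe γ =>
    rw [e] at h1
    have h2 : δ + γ = (0 : Gam) := by exact_mod_cast h1
    rw [eq_neg_of_add_eq_zero_right h2]

lemma val_add_min {ε : ℕ → ℤˣ} {g h : K} {γ δ : Gam} (hγ : val ε g = (γ : WithTop Gam))
    (hδ : val ε h = (δ : WithTop Gam)) (hne : γ ≠ δ) :
    val ε (g + h) = ((min γ δ : Gam) : WithTop Gam) := by
  rw [AddValuation.map_add_of_distinct_val _ (by rw [hγ, hδ]; exact_mod_cast hne), hγ, hδ]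
  rcases le_total γ δ with h | h
  · rw [min_eq_left h, min_eq_left (by exact_mod_cast h)]
  · rw [min_eq_right h, min_eq_right (by exact_mod_cast h)]

lemma val_AE {f : K} (hf : IsAE f) (ε : ℕ → ℤˣ) :
    ∃ γ : Gam, val ε f = (γ : WithTop Gam) ∧ Good (Vars f) γ := by
  have gadd : ∀ {g h : K}, Disjoint (Vars g) (Vars h) →
      (∃ γ : Gam, val ε g = (γ : WithTop Gam) ∧ Good (Vars g) γ) →
      (∃ γ : Gam, val ε h = (γ : WithTop Gam) ∧ Good (Vars h) γ) →
      ∃ γ : Gam, val ε (g + h) = (γ : WithTop Gam) ∧ Good (Vars (g + h)) γ := by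
    rintro g h hd ⟨γ, hγ, Gγ⟩ ⟨δ, hδ, Gδ⟩
    refine ⟨_, val_add_min hγ hδ (Gγ.ne hd Gδ), ?_⟩
    rw [Vars_add_disj hd]
    rcases min_choice γ δ with e | e <;> rw [e]
    · exact Gγ.mono Set.subset_union_left
    · exact Gδ.mono Set.subset_union_right
  have gmul : ∀ {g h : K}, (Vars g).Nonempty → (Vars h).Nonempty → Disjoint (Vars g) (Vars h) →
      (∃ γ : Gam, val ε g = (γ : WithTop Gam) ∧ Good (Vars g) γ) →
      (∃ γ : Gam, val ε h = (γ : WithTop Gam) ∧ Good (Vars h) γ) →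
      ∃ γ : Gam, val ε (g * h) = (γ : WithTop Gam) ∧ Good (Vars (g * h)) γ := by
    rintro g h hg hh hd ⟨γ, hγ, Gγ⟩ ⟨δ, hδ, Gδ⟩
    refine ⟨γ + δ, ?_, ?_⟩
    · rw [AddValuation.map_mul, hγ, hδ]; rfl
    · rw [Vars_mul_disj (ne_zero_of_Vars hg) (ne_zero_of_Vars hh) hd]
      exact Gγ.add hd Gδ
  induction hf with
  | var i =>
    refine ⟨_, val_Xv ε i, ?_, ?_⟩
    · intro h
      have := congrArg (fun x => (ofLex x) i) h
      simp [wt] at this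
    · intro j hj
      simp only [Vars_Xv, Set.mem_singleton_iff] at hj
      simp [wt, hj]
  | add _ _ hd hg hh => exact gadd hd hg hh
  | sub _ _ hd hg hh =>
    rw [sub_eq_add_neg]
    apply gadd (by rwa [Vars_neg]) hg
    rwa [Vars_neg, AddValuation.map_neg]
  | mul ag ah hd hg hh => exact gmul ag.vars_nonempty ah.vars_nonempty hd hg hh
  | div ag ah hd hg hh =>
    rw [div_eq_mul_inv]
    apply gmul ag.vars_nonempty (by rw [Vars_inv]; exact ah.vars_nonempty) (by rwa [Vars_inv]) hg
    obtain ⟨δ, hδ, Gδ⟩ := hh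
    rw [Vars_inv]
    exact ⟨-δ, val_inv hδ, Gδ.neg⟩

/-- The sign of the valuation can be prescribed, by prescribing the signs on `Vars f`. -/
lemma val_sign {f : K} (hf : IsAE f) :
    (∃ ε : ℕ → ℤˣ, ∀ ε' : ℕ → ℤˣ, (∀ i ∈ Vars f, ε' i = ε i) →
      ∃ γ : Gam, val ε' f = (γ : WithTop Gam) ∧ 0 < γ) ∧
    (∃ ε : ℕ → ℤˣ, ∀ ε' : ℕ → ℤˣ, (∀ i ∈ Vars f, ε' i = ε i) →
      ∃ γ : Gam, val ε' f = (γ : WithTop Gam) ∧ γ < 0) := by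
  have glue : ∀ {g h f : K} {p q r : Gam → Prop}, Disjoint (Vars g) (Vars h) →
      Vars f = Vars g ∪ Vars h →
      (∀ ε (γ δ : Gam), val ε g = (γ : WithTop Gam) → val ε h = (δ : WithTop Gam) → γ ≠ δ →
        p γ → q δ → ∃ η : Gam, val ε f = (η : WithTop Gam) ∧ r η) →
      IsAE g → IsAE h →
      (∃ ε : ℕ → ℤˣ, ∀ ε' : ℕ → ℤˣ, (∀ i ∈ Vars g, ε' i = ε i) →
        ∃ γ : Gam, val ε' g = (γ : WithTop Gam) ∧ p γ) →
      (∃ ε : ℕ → ℤˣ, ∀ ε' : ℕ → ℤˣ, (∀ i ∈ Vars h, ε' i = ε i) →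
        ∃ γ : Gam, val ε' h = (γ : WithTop Gam) ∧ q γ) →
      (∃ ε : ℕ → ℤˣ, ∀ ε' : ℕ → ℤˣ, (∀ i ∈ Vars f, ε' i = ε i) →
        ∃ γ : Gam, val ε' f = (γ : WithTop Gam) ∧ r γ) := by
    classical
    rintro g h f p q r hd hv H ag ah ⟨ε₁, h₁⟩ ⟨ε₂, h₂⟩
    refine ⟨fun i => if i ∈ Vars g then ε₁ i else ε₂ i, fun ε' hε => ?_⟩
    obtain ⟨γ, hγ, pγ⟩ := h₁ ε' (fun i hi => by
      rw [hε i (by rw [hv]; exact .inl hi)]; simp [hi])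
    obtain ⟨δ, hδ, pδ⟩ := h₂ ε' (fun i hi => by
      rw [hε i (by rw [hv]; exact .inr hi)]
      simp [Set.disjoint_right.1 hd hi])
    refine H ε' γ δ hγ hδ ?_ pγ pδ
    obtain ⟨γ', e, Gγ⟩ := val_AE ag ε'
    obtain ⟨δ', e', Gδ⟩ := val_AE ah ε'
    rw [hγ] at e
    rw [hδ] at e'
    rw [WithTop.coe_eq_coe.1 e, WithTop.coe_eq_coe.1 e']
    exact Gγ.ne hd Gδ
  induction hf with
  | var i =>
    constructor
    · refine ⟨fun _ => 1, fun ε' h => ⟨_, val_Xv ε' i, ?_⟩⟩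
      have := h i (by simp [Vars_Xv])
      rw [wt, this]
      have : toLex (0 : ℕ →₀ ℤ) < toLex (Finsupp.single i 1) :=
        lt_of_le_of_ne (Finsupp.toLex_monotone (by simp)) 
          fun e => by simpa using congrArg (fun x => (ofLex x) i) e
      simpa using this
    · refine ⟨fun _ => -1, fun ε' h => ⟨_, val_Xv ε' i, ?_⟩⟩
      have := h i (by simp [Vars_Xv])
      rw [wt, this]
      have : toLex (Finsupp.single i (-1)) < toLex (0 : ℕ →₀ ℤ) :=
        lt_of_le_of_ne (Finsupp.toLex_monotone (by simp)) 
          fun e => by simpa using congrArg (fun x => (ofLex x) i) e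
      simpa using this
  | add ag ah hd hg hh =>
    refine ⟨glue hd (Vars_add_disj hd) ?_ ag ah hg.1 hh.1,
      glue hd (Vars_add_disj hd) ?_ ag ah hg.2 hh.2⟩
    · intro ε γ δ hγ hδ hne p q
      exact ⟨_, val_add_min hγ hδ hne, lt_min p q⟩
    · intro ε γ δ hγ hδ hne p q
      exact ⟨_, val_add_min hγ hδ hne, min_lt_of_left_lt p⟩
  | @sub g h ag ah hd hg hh =>
    have hv := Vars_add_disj (by rwa [Vars_neg] : Disjoint (Vars g) (Vars (-h)))
    rw [← sub_eq_add_neg, Vars_neg] at hv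
    refine ⟨glue hd hv ?_ ag ah hg.1 hh.1, glue hd hv ?_ ag ah hg.2 hh.2⟩
    · intro ε γ δ hγ hδ hne p q
      rw [sub_eq_add_neg]
      exact ⟨_, val_add_min hγ (by rwa [AddValuation.map_neg]) hne, lt_min p q⟩
    · intro ε γ δ hγ hδ hne p q
      rw [sub_eq_add_neg]
      exact ⟨_, val_add_min hγ (by rwa [AddValuation.map_neg]) hne, min_lt_of_left_lt p⟩
  | mul ag ah hd hg hh =>
    have hv := Vars_mul_disj (ne_zero_of_Vars ag.vars_nonempty)
      (ne_zero_of_Vars ah.vars_nonempty) hd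
    refine ⟨glue hd hv ?_ ag ah hg.1 hh.1, glue hd hv ?_ ag ah hg.2 hh.2⟩
    · intro ε γ δ hγ hδ hne p q
      exact ⟨γ + δ, by rw [AddValuation.map_mul, hγ, hδ]; rfl, add_pos p q⟩
    · intro ε γ δ hγ hδ hne p q
      exact ⟨γ + δ, by rw [AddValuation.map_mul, hγ, hδ]; rfl, add_neg p q⟩
  | @div g h ag ah hd hg hh =>
    have hv := Vars_mul_disj (f := g) (g := h⁻¹) (ne_zero_of_Vars ag.vars_nonempty)
      (inv_ne_zero (ne_zero_of_Vars ah.vars_nonempty)) (by rwa [Vars_inv])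
    rw [← div_eq_mul_inv, Vars_inv] at hv
    refine ⟨glue hd hv ?_ ag ah hg.1 hh.2, glue hd hv ?_ ag ah hg.2 hh.1⟩
    · intro ε γ δ hγ hδ hne p q
      exact ⟨γ + -δ, by rw [div_eq_mul_inv, AddValuation.map_mul, hγ, val_inv hδ]; rfl,
        add_pos p (neg_pos.2 q)⟩
    · intro ε γ δ hγ hδ hne p q
      exact ⟨γ + -δ, by rw [div_eq_mul_inv, AddValuation.map_mul, hγ, val_inv hδ]; rfl,
        add_neg p (neg_neg_iff_pos.2 q)⟩

/-- Two arithmetic expressions (up to sign) differing by a constant are equal. -/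
lemma const_zero {f g : K} (hf : IsAE f ∨ IsAE (-f)) (hg : IsAE g ∨ IsAE (-g))
    (h : Vars (g - f) = ∅) : g = f := by
  obtain ⟨r, hr⟩ := eq_const h
  by_cases h0 : r = 0
  · subst h0; simp at hr; exact sub_eq_zero.1 hr
  exfalso
  have h1 : ∃ ε γ, val ε f = ((γ : Gam) : WithTop Gam) ∧ 0 < γ := by
    rcases hf with hf | hf
    · obtain ⟨ε, H⟩ := (val_sign hf).1
      exact ⟨ε, H ε fun _ _ => rfl⟩
    · obtain ⟨ε, H⟩ := (val_sign hf).1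
      obtain ⟨γ, h⟩ := H ε fun _ _ => rfl
      exact ⟨ε, γ, by rwa [AddValuation.map_neg] at h⟩
  obtain ⟨ε, γ, hγ, hpos⟩ := h1
  have h2 : ∃ δ : Gam, val ε g = (δ : WithTop Gam) ∧ δ ≠ 0 := by
    rcases hg with hg | hg
    · obtain ⟨δ, h, G⟩ := val_AE hg ε
      exact ⟨δ, h, G.1⟩
    · obtain ⟨δ, h, G⟩ := val_AE hg ε
      exact ⟨δ, by rwa [AddValuation.map_neg] at h, G.1⟩
  obtain ⟨δ, hδ, hne⟩ := h2
  have e : g = f + toK (C r) := by rw [← hr]; ring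
  rw [e, val_add_min hγ (val_C ε h0) hpos.ne', min_eq_right hpos.le] at hδ
  exact hne (WithTop.coe_eq_coe.1 hδ).symm

lemma mixDiff_perm (σ : Equiv.Perm ℕ) (a b a' b' : ℕ) (f : K) :
    mixDiff (σ a) (σ b) (σ a') (σ b') (permAct σ f) = permAct σ (mixDiff a b a' b' f) := by
  have key : ∀ x y (u : K), permAct (Equiv.swap (σ x) (σ y)) (permAct σ u) =
      permAct σ (permAct (Equiv.swap x y) u) := by
    intro x y u
    rw [← permAct_mul, ← permAct_mul, Equiv.mul_swap_eq_swap_mul]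
  simp only [mixDiff, map_sub, key]

lemma Link.perm {f : K} (h : Link f) (σ : Equiv.Perm ℕ) : Link (permAct σ f) := by
  intro A h1 h2
  rw [Vars_permAct] at *
  obtain ⟨a, ⟨ha, haA⟩, a', ⟨ha', haA'⟩, H⟩ := h (σ ⁻¹' A)
    (by obtain ⟨_, ⟨x, hx, rfl⟩, hA⟩ := h1; exact ⟨x, hx, hA⟩)
    (by obtain ⟨_, ⟨x, hx, rfl⟩, hA⟩ := h2; exact ⟨x, hx, hA⟩)
  refine ⟨σ a, ⟨⟨a, ha, rfl⟩, haA⟩, σ a', ⟨⟨a', ha', rfl⟩, haA'⟩, fun b b' hb hb' hbb => ?_⟩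
  obtain ⟨c, rfl⟩ := σ.surjective b
  obtain ⟨c', rfl⟩ := σ.surjective b'
  rw [mixDiff_perm]
  rw [σ.injective.mem_set_image] at hb hb'
  exact (map_ne_zero_iff _ (permAct σ).injective).2 (H c c' hb hb' fun e => hbb (by rw [e]))

/-! ### Decompositions -/

/-- Pairwise disjointness of the variable sets. -/
abbrev PD (s : Multiset K) : Prop := s.Pairwise (fun a b => Disjoint (Vars a) (Vars b))

instance symmDisj : Std.Symm (fun a b : K => Disjoint (Vars a) (Vars b)) :=
  ⟨fun _ _ h => h.symm⟩

lemma PD_cons {a : K} {s : Multiset K} :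
    PD (a ::ₘ s) ↔ (∀ b ∈ s, Disjoint (Vars a) (Vars b)) ∧ PD s := by
  induction s using Quotient.inductionOn with
  | _ l =>
    show Multiset.Pairwise _ ((a :: l : List K) : Multiset K) ↔ _ ∧ Multiset.Pairwise _ (l : Multiset K)
    rw [Multiset.pairwise_coe_iff_pairwise, Multiset.pairwise_coe_iff_pairwise, List.pairwise_cons]
    simp

lemma PD_zero : PD 0 := Multiset.pairwise_zero _

lemma PD_singleton (a : K) : PD {a} := by
  rw [← Multiset.cons_zero, PD_cons]
  exact ⟨by simp, PD_zero⟩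

lemma PD_add {s t : Multiset K} (hs : PD s) (ht : PD t)
    (h : ∀ a ∈ s, ∀ b ∈ t, Disjoint (Vars a) (Vars b)) : PD (s + t) := by
  induction s using Multiset.induction with
  | empty => simpa using ht
  | cons a s ih =>
    rw [PD_cons] at hs
    rw [Multiset.cons_add, PD_cons]
    refine ⟨fun b hb => ?_, ih hs.2 fun a ha => h a (Multiset.mem_cons_of_mem ha)⟩
    rcases Multiset.mem_add.1 hb with hb | hb
    · exact hs.1 b hb
    · exact h a (Multiset.mem_cons_self a s) b hb

lemma PD_map {s : Multiset K} (hs : PD s) {φ : K → K}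
    (h : ∀ a b, Disjoint (Vars a) (Vars b) → Disjoint (Vars (φ a)) (Vars (φ b))) :
    PD (s.map φ) := by
  induction s using Multiset.induction with
  | empty => simpa using hs
  | cons a s ih =>
    rw [PD_cons] at hs
    rw [Multiset.map_cons, PD_cons]
    refine ⟨fun b hb => ?_, ih hs.2⟩
    obtain ⟨c, hc, rfl⟩ := Multiset.mem_map.1 hb
    exact h _ _ (hs.1 c hc)

lemma Vars_sum_sub (s : Multiset K) : Vars s.sum ⊆ {i | ∃ g ∈ s, i ∈ Vars g} := by
  induction s using Multiset.induction with
  | empty => simp [Vars_zero]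
  | cons a s ih =>
    rw [Multiset.sum_cons]
    intro i hi
    rcases Vars_add _ _ hi with h | h
    · exact ⟨a, by simp, h⟩
    · obtain ⟨g, hg, h⟩ := ih h
      exact ⟨g, by simp [hg], h⟩

lemma disj_sum {a : K} {s : Multiset K} (h : ∀ b ∈ s, Disjoint (Vars a) (Vars b)) :
    Disjoint (Vars a) (Vars s.sum) := by
  rw [Set.disjoint_left]
  intro i hi hs
  obtain ⟨g, hg, h'⟩ := Vars_sum_sub s hs
  exact Set.disjoint_left.1 (h g hg) hi h'

lemma Vars_sum {s : Multiset K} (hs : PD s) : Vars s.sum = {i | ∃ g ∈ s, i ∈ Vars g} := by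
  apply (Vars_sum_sub s).antisymm
  induction s using Multiset.induction with
  | empty => simp
  | cons a s ih =>
    rw [PD_cons] at hs
    rw [Multiset.sum_cons, Vars_add_disj (disj_sum hs.1)]
    rintro i ⟨g, hg, hi⟩
    rcases Multiset.mem_cons.1 hg with rfl | hg
    · exact .inl hi
    · exact .inr (ih hs.2 ⟨g, hg, hi⟩)

lemma AE_sum {s : Multiset K} (hs : PD s) (h : ∀ g ∈ s, IsAE g) (h0 : s ≠ 0) : IsAE s.sum := by
  induction s using Multiset.induction with
  | empty => simp at h0
  | cons a s ih =>
    rw [PD_cons] at hs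
    rw [Multiset.sum_cons]
    by_cases e : s = 0
    · subst e; simpa using h a (by simp)
    · exact .add (h a (by simp)) (ih hs.2 (fun g hg => h g (by simp [hg])) e) (disj_sum hs.1)

/-- Atoms: multiplicative arithmetic expressions, up to sign. -/
def Atom (f : K) : Prop := (IsAE f ∨ IsAE (-f)) ∧ Link f

lemma Atom.neg {f : K} (h : Atom f) : Atom (-f) :=
  ⟨by rw [neg_neg]; exact h.1.symm, h.2.neg⟩

lemma Atom.nonempty {f : K} (h : Atom f) : (Vars f).Nonempty := by
  rcases h.1 with h | h
  · exact h.vars_nonempty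
  · rw [← Vars_neg]; exact h.vars_nonempty

/-- Signed decompositions into atoms. -/
def Decomp (f : K) (s : Multiset K) : Prop := (∀ g ∈ s, Atom g) ∧ PD s ∧ s.sum = f

lemma atom_eq {u v g r : K} (hu : Atom u) (hg : Atom g) (huv : Disjoint (Vars u) (Vars v))
    (hgr : Disjoint (Vars g) (Vars r)) (e : u + v = g + r)
    (hne : (Vars u ∩ Vars g).Nonempty) : u = g := by
  have h1 : Vars g ⊆ Vars u := link_subset hg.2 huv hgr e hne
  have h2 : Vars u ⊆ Vars g :=
    link_subset hu.2 hgr huv e.symm (by rwa [Set.inter_comm])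
  have h3 : Vars u = Vars g := h2.antisymm h1
  apply const_zero hg.1 hu.1
  have e' : u - g = r - v := by linear_combination e
  ext i
  simp only [Set.mem_empty_iff_false, iff_false]
  intro hi
  have hi1 : i ∈ Vars u := by
    rcases Vars_sub _ _ hi with h | h
    · exact h
    · exact h1 h
  rw [e'] at hi
  rcases Vars_sub _ _ hi with h | h
  · exact Set.disjoint_left.1 hgr (h2 hi1) h
  · exact Set.disjoint_left.1 huv hi1 h

lemma decomp_unique {s : Multiset K} : ∀ {f : K} {t : Multiset K},
    Decomp f s → Decomp f t → s = t := by
  induction s using Multiset.induction with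
  | empty =>
    rintro f t ⟨-, -, h⟩ ⟨ht, hp, h'⟩
    simp at h
    subst h
    by_contra hne
    obtain ⟨g, hg⟩ := Multiset.exists_mem_of_ne_zero (Ne.symm hne)
    obtain ⟨i, hi⟩ := (ht g hg).nonempty
    have : i ∈ Vars t.sum := by rw [Vars_sum hp]; exact ⟨g, hg, hi⟩
    simp [h', Vars_zero] at this
  | cons u s ih =>
    rintro f t ⟨hs, hps, h⟩ ⟨ht, hpt, h'⟩
    have hu := hs u (by simp)
    obtain ⟨i, hi⟩ := hu.nonempty
    have : i ∈ Vars t.sum := by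
      rw [h', ← h, Vars_sum hps]; exact ⟨u, by simp, hi⟩
    rw [Vars_sum hpt] at this
    obtain ⟨g, hg, hig⟩ := this
    obtain ⟨t', rfl⟩ := Multiset.exists_cons_of_mem hg
    rw [PD_cons] at hps hpt
    have e : u + s.sum = g + t'.sum := by
      rw [← Multiset.sum_cons, ← Multiset.sum_cons, h, h']
    have hug : u = g := atom_eq hu (ht g hg) (disj_sum hps.1) (disj_sum hpt.1) e ⟨i, hi, hig⟩
    subst hug
    congr 1
    exact ih ⟨fun g hg => hs g (by simp [hg]), hps.2, add_left_cancel e⟩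
      ⟨fun g hg => ht g (by simp [hg]), hpt.2, rfl⟩

lemma Decomp.neg {f : K} {s : Multiset K} (h : Decomp f s) : Decomp (-f) (s.map (fun g => -g)) := by
  refine ⟨?_, PD_map h.2.1 fun a b h => by rwa [Vars_neg, Vars_neg], ?_⟩
  · intro g hg
    obtain ⟨c, hc, rfl⟩ := Multiset.mem_map.1 hg
    exact (h.1 c hc).neg
  · rw [Multiset.sum_map_neg', h.2.2]

lemma Decomp.add {f g : K} {s t : Multiset K} (hs : Decomp f s) (ht : Decomp g t)
    (hd : Disjoint (Vars f) (Vars g)) : Decomp (f + g) (s + t) := by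
  refine ⟨?_, PD_add hs.2.1 ht.2.1 ?_, ?_⟩
  · intro a ha
    rcases Multiset.mem_add.1 ha with ha | ha
    · exact hs.1 a ha
    · exact ht.1 a ha
  · intro a ha b hb
    rw [← hs.2.2, ← ht.2.2, Vars_sum hs.2.1, Vars_sum ht.2.1] at hd
    rw [Set.disjoint_left] at hd ⊢
    intro i hi hi'
    exact hd ⟨a, ha, hi⟩ ⟨b, hb, hi'⟩
  · rw [Multiset.sum_add, hs.2.2, ht.2.2]

lemma Decomp.single {f : K} (h : Atom f) : Decomp f {f} :=
  ⟨by simpa using h, PD_singleton f, by simp⟩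

lemma exists_decomp {f : K} (hf : IsAE f) : ∃ s, Decomp f s ∧ ∃ a ∈ s, IsAE a := by
  induction hf with
  | var i => exact ⟨_, .single ⟨.inl (.var i), link_Xv i⟩, Xv i, by simp, .var i⟩
  | add _ _ hd hg hh =>
    obtain ⟨s, hs, a, ha, hA⟩ := hg
    obtain ⟨t, ht, -⟩ := hh
    exact ⟨s + t, hs.add ht hd, a, by simp [ha], hA⟩
  | sub _ _ hd hg hh =>
    obtain ⟨s, hs, a, ha, hA⟩ := hg
    obtain ⟨t, ht, -⟩ := hh
    rw [sub_eq_add_neg]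
    exact ⟨_, hs.add ht.neg (by rwa [Vars_neg]), a, by simp [ha], hA⟩
  | mul ag ah hd hg hh =>
    exact ⟨_, .single ⟨.inl (.mul ag ah hd), link_mul ag.vars_nonempty ah.vars_nonempty hd⟩,
      _, Multiset.mem_singleton_self _, .mul ag ah hd⟩
  | div ag ah hd hg hh =>
    exact ⟨_, .single ⟨.inl (.div ag ah hd), link_div ag.vars_nonempty ah.vars_nonempty hd⟩,
      _, Multiset.mem_singleton_self _, .div ag ah hd⟩

lemma disj_Xv {i j : ℕ} (h : i ≠ j) : Disjoint (Vars (Xv i)) (Vars (Xv j)) := by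
  rw [Vars_Xv, Vars_Xv]; simpa using h

lemma endsWith_link {f : K} {o : Op} (h : EndsWith f o) (ho : o = Op.mul ∨ o = Op.div) :
    Link f := by
  cases h with
  | var i => exact link_Xv i
  | mul_base hij => exact link_mul (by simp [Vars_Xv]) (by simp [Vars_Xv]) (disj_Xv hij)
  | div_base hij => exact link_div (by simp [Vars_Xv]) (by simp [Vars_Xv]) (disj_Xv hij)
  | mul_rec hg hh hd => exact link_mul hg.vars_nonempty hh.vars_nonempty hd
  | div_rec hg hh hd => exact link_div hg.vars_nonempty hh.vars_nonempty hd
  | _ => simp at ho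

lemma SumDecomp.decomp {f : K} {s : Multiset K} (h : SumDecomp f s) : Decomp f s := by
  obtain ⟨-, h1, h2, h3, -⟩ := h
  refine ⟨fun g hg => ⟨.inl (h1 g hg).1, ?_⟩, h2, h3.symm⟩
  rcases (h1 g hg).2 with h | h
  · exact endsWith_link h (.inl rfl)
  · exact endsWith_link h (.inr rfl)

/-- Existence of the decomposition. -/
lemma endsWith_exists {f : K} {o : Op} (h : EndsWith f o) (ho : o ≠ Op.sub) :
    ∃ s : Multiset K, s ≠ 0 ∧ (o = Op.add → 2 ≤ Multiset.card s) ∧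
      (∀ g ∈ s, IsAE g ∧ (EndsWith g Op.mul ∨ EndsWith g Op.div)) ∧ PD s ∧ f = s.sum := by
  have single : ∀ {f : K} {o : Op}, IsAE f → EndsWith f o → o = Op.mul ∨ o = Op.div →
      ∃ s : Multiset K, s ≠ 0 ∧ (o = Op.add → 2 ≤ Multiset.card s) ∧
      (∀ g ∈ s, IsAE g ∧ (EndsWith g Op.mul ∨ EndsWith g Op.div)) ∧ PD s ∧ f = s.sum := by
    intro f o hf h ho
    refine ⟨{f}, by simp, ?_, ?_, PD_singleton f, by simp⟩
    · rcases ho with rfl | rfl <;> simp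
    · intro g hg
      rw [Multiset.mem_singleton] at hg
      subst hg
      rcases ho with rfl | rfl
      · exact ⟨hf, .inl h⟩
      · exact ⟨hf, .inr h⟩
  have add : ∀ {g h : K} {o₁ o₂ : Op}, Disjoint (Vars g) (Vars h) →
      (∃ s : Multiset K, s ≠ 0 ∧ (o₁ = Op.add → 2 ≤ Multiset.card s) ∧
      (∀ g ∈ s, IsAE g ∧ (EndsWith g Op.mul ∨ EndsWith g Op.div)) ∧ PD s ∧ g = s.sum) →
      (∃ s : Multiset K, s ≠ 0 ∧ (o₂ = Op.add → 2 ≤ Multiset.card s) ∧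
      (∀ g ∈ s, IsAE g ∧ (EndsWith g Op.mul ∨ EndsWith g Op.div)) ∧ PD s ∧ h = s.sum) →
      (∃ s : Multiset K, s ≠ 0 ∧ (Op.add = Op.add → 2 ≤ Multiset.card s) ∧
      (∀ g ∈ s, IsAE g ∧ (EndsWith g Op.mul ∨ EndsWith g Op.div)) ∧ PD s ∧ g + h = s.sum) := by
    rintro g h o₁ o₂ hd ⟨s, s0, -, hs, ps, rfl⟩ ⟨t, t0, -, ht, pt, rfl⟩
    have c1 := Multiset.card_pos.2 s0
    have c2 := Multiset.card_pos.2 t0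
    refine ⟨s + t, ?_, ?_, ?_, ?_, by simp⟩
    · rw [← Multiset.card_pos, Multiset.card_add]; omega
    · rw [Multiset.card_add]; omega
    · intro a ha
      rcases Multiset.mem_add.1 ha with ha | ha
      · exact hs a ha
      · exact ht a ha
    · apply PD_add ps pt
      intro a ha b hb
      rw [Vars_sum ps, Vars_sum pt, Set.disjoint_left] at hd
      rw [Set.disjoint_left]
      intro i hi hi'
      exact hd ⟨a, ha, hi⟩ ⟨b, hb, hi'⟩
  induction h with
  | var i => exact single (.var i) (.var i) (.inl rfl)
  | @add_base i j hij =>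
    exact add (disj_Xv hij) (single (.var i) (.var i) (.inl rfl))
      (single (.var j) (.var j) (.inl rfl))
  | sub_base hij => exact absurd rfl ho
  | @mul_base i j hij =>
    exact single (.mul (.var i) (.var j) (disj_Xv hij)) (.mul_base hij) (.inl rfl)
  | @div_base i j hij =>
    exact single (.div (.var i) (.var j) (disj_Xv hij)) (.div_base hij) (.inr rfl)
  | add_rec _ _ hd _ h1 h2 _ _ ih1 ih2 => exact add hd (ih1 h1) (ih2 h2)
  | mul_rec a1 a2 hd h3 h1 h2 e1 e2 =>
    exact single (.mul a1 a2 hd) (.mul_rec a1 a2 hd h3 h1 h2 e1 e2) (.inl rfl)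
  | div_rec a1 a2 hd h3 h1 h2 e1 e2 =>
    exact single (.div a1 a2 hd) (.div_rec a1 a2 hd h3 h1 h2 e1 e2) (.inr rfl)
  | sub_rec => exact absurd rfl ho

/-! ### Isomorphism -/

lemma Iso.rfl' (f : K) : Iso f f := ⟨1, permAct_one f⟩

lemma Iso.symm {f g : K} (h : Iso f g) : Iso g f := by
  obtain ⟨σ, rfl⟩ := h
  exact ⟨σ⁻¹, by rw [← permAct_mul, inv_mul_cancel, permAct_one]⟩

lemma Iso.trans {f g h : K} (h1 : Iso f g) (h2 : Iso g h) : Iso f h := by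
  obtain ⟨σ, rfl⟩ := h1
  obtain ⟨τ, rfl⟩ := h2
  exact ⟨τ * σ, permAct_mul _ _ _⟩

lemma Iso.neg {f g : K} (h : Iso f g) : Iso (-f) (-g) := by
  obtain ⟨σ, rfl⟩ := h
  exact ⟨σ, map_neg _ _⟩

lemma classOf_eq {f g : K} : classOf f = classOf g ↔ Iso f g := by
  constructor
  · intro h
    have : g ∈ classOf g := Iso.rfl' g
    rwa [← h] at this
  · intro h
    ext x
    exact ⟨fun h' => h.symm.trans h', fun h' => h.trans h'⟩

/-- Negation of a set. -/
def negS (S : Set K) : Set K := {x | -x ∈ S}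

lemma negS_negS (S : Set K) : negS (negS S) = S := by
  ext x; simp [negS]

lemma negS_classOf (f : K) : negS (classOf f) = classOf (-f) := by
  ext x
  constructor
  · intro h; show Iso (-f) x; simpa using Iso.neg (show Iso f (-x) from h)
  · intro h; show Iso f (-x); simpa using Iso.neg (show Iso (-f) x from h)

/-- Pairing lemma. -/
lemma pairing {α β : Type*} (q : α → β) (N : β → β) (hN : ∀ b, N (N b) = b) :
    ∀ (n : ℕ) (s : Multiset α), Multiset.card s = n → s.map q = s.map (fun a => N (q a)) →
    ∃ (c : Multiset α) (m : Multiset (α × α)), s = c + m.map Prod.fst + m.map Prod.snd ∧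
      (∀ g ∈ c, N (q g) = q g) ∧
      ∀ pr ∈ m, q pr.1 = N (q pr.2) ∧ N (q pr.1) ≠ q pr.1 ∧ N (q pr.2) ≠ q pr.2 := by
  intro n
  induction n using Nat.strong_induction_on with
  | _ n ih =>
    intro s hn h
    by_cases h0 : s = 0
    · exact ⟨0, 0, by simp [h0], by simp, by simp⟩
    obtain ⟨g, hg⟩ := Multiset.exists_mem_of_ne_zero h0
    obtain ⟨s', rfl⟩ := Multiset.exists_cons_of_mem hg
    rw [Multiset.card_cons] at hn
    by_cases e : N (q g) = q g
    · rw [Multiset.map_cons, Multiset.map_cons, e, Multiset.cons_inj_right] at h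
      obtain ⟨c, m, rfl, hc, hm⟩ := ih _ (by omega) s' rfl h
      refine ⟨g ::ₘ c, m, by simp, ?_, hm⟩
      intro x hx
      rcases Multiset.mem_cons.1 hx with rfl | hx
      · exact e
      · exact hc x hx
    · have hm : q g ∈ (g ::ₘ s').map (fun a => N (q a)) := by rw [← h]; simp
      obtain ⟨b, hb, hbe⟩ := Multiset.mem_map.1 hm
      have hb' : b ∈ s' := by
        rcases Multiset.mem_cons.1 hb with rfl | hb
        · exact absurd hbe e
        · exact hb
      obtain ⟨s'', rfl⟩ := Multiset.exists_cons_of_mem hb'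
      have hbe' : N (q g) = q b := by rw [← hbe, hN]
      simp only [Multiset.map_cons, hbe, hbe'] at h
      rw [Multiset.cons_swap, Multiset.cons_inj_right, Multiset.cons_inj_right] at h
      rw [Multiset.card_cons] at hn
      obtain ⟨c, m, rfl, hc, hm⟩ := ih _ (by omega) s'' rfl h
      refine ⟨c, (g, b) ::ₘ m, by simp; exact Multiset.cons_swap _ _ _, hc, ?_⟩
      intro pr hpr
      rcases Multiset.mem_cons.1 hpr with rfl | hpr
      · refine ⟨hbe.symm, e, ?_⟩
        rw [hbe, ← hbe']
        exact fun h => e h.symm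
      · exact hm pr hpr

/-- `u ≅ -u` through a permutation that only moves the variables of `u`. -/
def Flip (u : K) : Prop := ∃ σ : Equiv.Perm ℕ, (∀ i, i ∉ Vars u → σ i = i) ∧ permAct σ u = -u

lemma Flip.zero : Flip 0 := ⟨1, by simp, by simp⟩

lemma Flip.add {u v : K} (hu : Flip u) (hv : Flip v) (hd : Disjoint (Vars u) (Vars v)) :
    Flip (u + v) := by
  obtain ⟨σ, h1, h2⟩ := hu
  obtain ⟨τ, h3, h4⟩ := hv
  rw [Set.disjoint_left] at hd
  refine ⟨σ * τ, ?_, ?_⟩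
  · intro i hi
    rw [Vars_add_disj (Set.disjoint_left.2 hd)] at hi
    simp only [Set.mem_union, not_or] at hi
    simp [h3 i hi.2, h1 i hi.1]
  · rw [permAct_mul, map_add, h4, permAct_fix fun i hi => h3 i (hd hi), map_add, h2, map_neg,
      permAct_fix fun i hi => h1 i (fun h => hd h hi)]
    ring

lemma Flip.of_iso {u : K} (h : Iso u (-u)) : Flip u := by
  obtain ⟨σ, h⟩ := h
  have hv := congrArg Vars h
  rw [Vars_permAct, Vars_neg] at hv
  have hiff : ∀ i, σ i ∈ Vars u ↔ i ∈ Vars u := by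
    intro i
    constructor
    · intro hi
      rw [← hv] at hi
      exact (σ.injective.mem_set_image).1 hi
    · intro hi; rw [← hv]; exact ⟨i, hi, rfl⟩
  classical
  refine ⟨Equiv.Perm.ofSubtype (σ.subtypePerm hiff), ?_, ?_⟩
  · intro i hi
    exact Equiv.Perm.ofSubtype_apply_of_not_mem _ hi
  · rw [← h]
    apply permAct_congr
    intro i hi
    rw [Equiv.Perm.ofSubtype_apply_of_mem _ hi]
    rfl

lemma Flip.of_pair {a b : K} (h : Iso a (-b)) (hd : Disjoint (Vars a) (Vars b)) : Flip (a + b) := by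
  classical
  obtain ⟨σ, h⟩ := h
  have hv := congrArg Vars h
  rw [Vars_permAct, Vars_neg] at hv
  have hd' := Set.disjoint_left.1 hd
  have h1 : ∀ i, i ∈ Vars a → σ i ∈ Vars b := fun i hi => hv ▸ ⟨i, hi, rfl⟩
  have h2 : ∀ i, i ∈ Vars b → σ⁻¹ i ∈ Vars a := by
    intro i hi
    rw [← hv] at hi
    obtain ⟨j, hj, rfl⟩ := hi
    simpa using hj
  let φ : ℕ → ℕ := fun i => if i ∈ Vars a then σ i else if i ∈ Vars b then σ⁻¹ i else i
  have φa : ∀ i, i ∈ Vars a → φ i = σ i := fun i hi => by simp [φ, hi]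
  have φb : ∀ i, i ∈ Vars b → φ i = σ⁻¹ i := fun i hi => by
    simp only [φ]
    rw [if_neg (fun h => hd' h hi), if_pos hi]
  have φc : ∀ i, i ∉ Vars a → i ∉ Vars b → φ i = i := fun i hi hi' => by simp [φ, hi, hi']
  have hinv : Function.Involutive φ := by
    intro i
    by_cases ha : i ∈ Vars a
    · rw [φa i ha, φb _ (h1 i ha)]; simp
    by_cases hb : i ∈ Vars b
    · rw [φb i hb, φa _ (h2 i hb)]; simp
    rw [φc i ha hb, φc i ha hb]
  refine ⟨hinv.toPerm, ?_, ?_⟩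
  · intro i hi
    rw [Vars_add_disj hd] at hi
    simp only [Set.mem_union, not_or] at hi
    exact φc i hi.1 hi.2
  · rw [map_add, permAct_congr (f := a) (τ := σ) φa, permAct_congr (f := b) (τ := σ⁻¹) φb, h]
    have hb : b = -permAct σ a := by rw [h, neg_neg]
    have : permAct σ⁻¹ b = -a := by
      rw [hb, map_neg, ← permAct_mul, inv_mul_cancel, permAct_one]
    rw [this]; ring

lemma Flip.sum {c : Multiset K} (hc : ∀ g ∈ c, ThirdType g) {m : Multiset (K × K)} :
    (∀ pr ∈ m, SecondType pr.1 ∧ SecondType pr.2 ∧ Iso pr.1 (-pr.2)) →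
    PD (c + m.map Prod.fst + m.map Prod.snd) →
    Flip (c + m.map Prod.fst + m.map Prod.snd).sum := by
  induction m using Multiset.induction with
  | empty =>
    simp only [Multiset.map_zero, add_zero]
    intro _ hp
    induction c using Multiset.induction with
    | empty => simpa using Flip.zero
    | cons a c ih =>
      rw [PD_cons] at hp
      rw [Multiset.sum_cons]
      exact (Flip.of_iso (hc a (by simp)).2.2).add (ih (fun g hg => hc g (by simp [hg])) hp.2)
        (disj_sum hp.1)
  | cons p m ih =>
    intro hm hp
    have e : c + (p ::ₘ m).map Prod.fst + (p ::ₘ m).map Prod.snd =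
        p.1 ::ₘ p.2 ::ₘ (c + m.map Prod.fst + m.map Prod.snd) := by
      simp; exact Multiset.cons_swap _ _ _
    rw [e] at hp ⊢
    rw [PD_cons, PD_cons] at hp
    rw [Multiset.sum_cons, Multiset.sum_cons, ← add_assoc]
    have hd : Disjoint (Vars p.1) (Vars p.2) := hp.1 _ (by simp)
    refine (Flip.of_pair (hm p (by simp)).2.2 hd).add
      (ih (fun pr h => hm pr (by simp [h])) hp.2.2) ?_
    rw [Vars_add_disj hd, Set.disjoint_union_left]
    exact ⟨disj_sum fun b hb => hp.1 b (Multiset.mem_cons_of_mem hb), disj_sum hp.2.1⟩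

lemma neg_AE_of_mem {f : K} {s : Multiset K} (h : SumDecomp f s) {g : K} (hg : g ∈ s)
    (hn : IsAE (-g)) : IsAE (-f) := by
  obtain ⟨h1, h2, h3, rfl, -⟩ := h
  obtain ⟨t, rfl⟩ := Multiset.exists_cons_of_mem hg
  have h3' : PD (g ::ₘ t) := h3
  rw [PD_cons] at h3'
  rw [Multiset.card_cons] at h1
  have ht : IsAE t.sum := AE_sum h3'.2 (fun a ha => (h2 a (by simp [ha])).1) (by
    rintro rfl; simp at h1)
  have e : -(g ::ₘ t).sum = -g - t.sum := by rw [Multiset.sum_cons]; ring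
  rw [e]
  exact .sub hn ht (by rw [Vars_neg]; exact disj_sum h3'.1)


/-- Every `f ∈ 𝒜(+)` can be expressed uniquely, up to the order of the
summands, as `f = f₁ + ⋯ + f_n` with `n ≥ 2`, pairwise disjoint variable sets whose union
is `𝒱(f)`, and each `fⱼ ∈ 𝒜(×,÷)`. Moreover (i) `f` is of the first type iff every `fⱼ`
is of the first type, and (ii) `f` is of the third type iff every `fⱼ` is of the second or
third type and the second-type summands can be grouped into pairs `{f_{j'}, f_{j''}}`
with `f_{j'} ≅ -f_{j''}`. -/
theorem sum_decomposition (f : K) (hf : IsAE f) (hadd : EndsWith f Op.add) :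
    (∃! s : Multiset K, SumDecomp f s) ∧
    ∀ s : Multiset K, SumDecomp f s →
      ((FirstType f ↔ ∀ g ∈ s, FirstType g) ∧
       (ThirdType f ↔
          ∃ (c : Multiset K) (m : Multiset (K × K)),
            s = c + m.map Prod.fst + m.map Prod.snd ∧
            (∀ g ∈ c, ThirdType g) ∧
            (∀ pr ∈ m, SecondType pr.1 ∧ SecondType pr.2 ∧ Iso pr.1 (-pr.2)))) := by
  refine ⟨?_, fun s hs => ⟨?_, ?_⟩⟩
  · obtain ⟨s, -, h2, h3, h4, h5⟩ := endsWith_exists hadd (by simp)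
    have hs : SumDecomp f s := ⟨h2 rfl, h3, h4, h5, by rw [h5, Vars_sum h4]⟩
    exact ⟨s, hs, fun t ht => decomp_unique ht.decomp hs.decomp⟩
  · constructor
    · intro h g hg
      exact ⟨(hs.2.1 g hg).1, fun hn => h.2 (neg_AE_of_mem hs hg hn)⟩
    · intro h
      refine ⟨hf, fun hn => ?_⟩
      obtain ⟨t, ht, a, ha, hA⟩ := exists_decomp hn
      rw [decomp_unique ht hs.decomp.neg] at ha
      obtain ⟨g, hg, rfl⟩ := Multiset.mem_map.1 ha
      exact (h g hg).2 hA
  · constructor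
    · rintro ⟨-, -, σ, hσ⟩
      have hd : Decomp (-f) (s.map (permAct σ)) := by
        have hD := hs.decomp
        refine ⟨?_, ?_, ?_⟩
        · intro a ha
          obtain ⟨g, hg, rfl⟩ := Multiset.mem_map.1 ha
          exact ⟨.inl ((hs.2.1 g hg).1.perm σ), Link.perm (hD.1 g hg).2 σ⟩
        · apply PD_map hD.2.1
          intro a b h
          rw [Vars_permAct, Vars_permAct]
          exact (Set.disjoint_image_iff σ.injective).2 h
        · rw [← hσ, ← hD.2.2, map_multiset_sum]
      have key : s.map (permAct σ) = s.map (fun g => -g) := decomp_unique hd hs.decomp.neg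
      have hneg : ∀ g ∈ s, IsAE (-g) := by
        intro g hg
        have : -g ∈ s.map (permAct σ) := by rw [key]; exact Multiset.mem_map_of_mem _ hg
        obtain ⟨a, ha, e⟩ := Multiset.mem_map.1 this
        rw [← e]
        exact (hs.2.1 a ha).1.perm σ
      have hq : s.map classOf = s.map (fun a => negS (classOf a)) := by
        have h := congrArg (Multiset.map classOf) key
        rw [Multiset.map_map, Multiset.map_map] at h
        have e1 : classOf ∘ (permAct σ) = classOf := by
          funext g
          exact classOf_eq.2 (Iso.symm ⟨σ, rfl⟩)
        have e2 : (classOf ∘ fun g : K => -g) = fun a => negS (classOf a) := by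
          funext g
          exact (negS_classOf g).symm
        rwa [e1, e2] at h
      obtain ⟨c, m, e, hc, hm⟩ := pairing classOf negS negS_negS _ s rfl hq
      refine ⟨c, m, e, ?_, ?_⟩
      · intro g hg
        have hgs : g ∈ s := by rw [e]; simp [hg]
        refine ⟨(hs.2.1 g hgs).1, hneg g hgs, ?_⟩
        have := hc g hg
        rw [negS_classOf, classOf_eq] at this
        exact this.symm
      · intro pr hpr
        have h1 : pr.1 ∈ s := by
          rw [e]
          exact Multiset.mem_add.2 (.inl (Multiset.mem_add.2 (.inr (Multiset.mem_map_of_mem _ hpr))))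
        have h2 : pr.2 ∈ s := by
          rw [e]
          exact Multiset.mem_add.2 (.inr (Multiset.mem_map_of_mem _ hpr))
        obtain ⟨e1, e2, e3⟩ := hm pr hpr
        rw [negS_classOf] at e1 e2 e3
        exact ⟨⟨(hs.2.1 _ h1).1, hneg _ h1, fun h => e2 (classOf_eq.2 h.symm)⟩,
          ⟨(hs.2.1 _ h2).1, hneg _ h2, fun h => e3 (classOf_eq.2 h.symm)⟩, classOf_eq.1 e1⟩
    · rintro ⟨c, m, e, hc, hm⟩
      have hall : ∀ g ∈ s, IsAE (-g) := by
        intro g hg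
        rw [e] at hg
        rcases Multiset.mem_add.1 hg with hg | hg
        · rcases Multiset.mem_add.1 hg with hg | hg
          · exact (hc g hg).2.1
          · obtain ⟨pr, hpr, rfl⟩ := Multiset.mem_map.1 hg
            exact (hm pr hpr).1.2.1
        · obtain ⟨pr, hpr, rfl⟩ := Multiset.mem_map.1 hg
          exact (hm pr hpr).2.1.2.1
      have hne : s ≠ 0 := by
        rintro rfl
        have := hs.1
        simp at this
      obtain ⟨g, hg⟩ := Multiset.exists_mem_of_ne_zero hne
      refine ⟨hf, neg_AE_of_mem hs hg (hall g hg), ?_⟩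
      have hp : PD s := hs.2.2.1
      have hsum := hs.2.2.2.1
      rw [e] at hp hsum
      obtain ⟨σ, -, hσ⟩ := Flip.sum hc hm hp
      rw [← hsum] at hσ
      exact ⟨σ, hσ⟩


end
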